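/- Let b, λ ∈ ℂ with |b| < 1 and |λ| = 1, and let γ(z) = λ·(z − b)/(1 − conj(b)·z). Then for every measurable function h : ℂ → [0, ∞], ∫_0^{2π} h(γ(e^{iθ}))·|γ′(e^{iθ})| dθ = ∫_0^{2π} h(e^{iθ}) dθ, where γ′ denotes the complex derivative of γ. -/

import Mathlib

open Complex MeasureTheory ENNReal

open Set Topology
open scoped ComplexConjugate

/-!
On the unit circle `γ(e^{iθ}) = e^{iφ(θ)}` with
`φ(θ) = arg l + θ - 2 arg (1 - conj b · e^{iθ})`, because there `z - b = z · conj (1 - conj b · z)`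
and `conj w / w = e^{-2 i arg w}`. The argument on the right is smooth and `2π`-periodic, as
`1 - conj b · e^{iθ}` stays in the right half-plane; hence `φ` advances by exactly `2π` over a
period. Its derivative is a Poisson kernel, so it is nonnegative, and differentiating
`γ(e^{iθ}) = e^{iφ(θ)}` shows that it equals `|γ'(e^{iθ})|`. The identity is then the
one-dimensional change of variables `x = φ(θ)` for a `2π`-periodic integrand.
-/

lemma lintegral_Ioc_add_eq_of_periodic {g : ℝ → ℝ≥0∞} {T : ℝ} (hT : 0 < T)
    (hg : Function.Periodic g T) (s t : ℝ) :
    ∫⁻ x in Ioc s (s + T), g x = ∫⁻ x in Ioc t (t + T), g x := by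
  have : Fact (0 < T) := ⟨hT⟩
  exact (AddCircle.lintegral_preimage T s hg.lift).trans
    (AddCircle.lintegral_preimage T t hg.lift).symm

lemma lintegral_Ioc_deriv_mul_comp_eq_of_monotoneOn {φ φ' : ℝ → ℝ} {a b : ℝ} (hab : a ≤ b)
    (hφ : ∀ x ∈ Icc a b, HasDerivWithinAt φ (φ' x) (Icc a b) x) (hmono : MonotoneOn φ (Icc a b))
    (g : ℝ → ℝ≥0∞) :
    ∫⁻ x in Ioc a b, ENNReal.ofReal (φ' x) * g (φ x) = ∫⁻ y in Ioc (φ a) (φ b), g y := by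
  have image_Icc : φ '' Icc a b = Icc (φ a) (φ b) :=
    ContinuousOn.image_Icc_of_monotoneOn hab (fun x hx ↦ (hφ x hx).continuousWithinAt) hmono
  rw [restrict_Ioc_eq_restrict_Icc, restrict_Ioc_eq_restrict_Icc, ← image_Icc,
    lintegral_image_eq_lintegral_deriv_mul_of_monotoneOn measurableSet_Icc hφ hmono]

lemma hasDerivAt_exp_ofReal_mul_I {φ : ℝ → ℝ} {φ' θ : ℝ} (hφ : HasDerivAt φ φ' θ) :
    HasDerivAt (fun t : ℝ ↦ exp (φ t * I)) (exp (φ θ * I) * (φ' * I)) θ :=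
  (hφ.ofReal_comp.mul_const I).cexp

lemma norm_deriv_eq_abs_of_eventuallyEq_exp {f : ℂ → ℂ} {φ : ℝ → ℝ} {φ' θ : ℝ}
    (hf : DifferentiableAt ℂ f (exp (θ * I))) (hφ : HasDerivAt φ φ' θ)
    (hlift : (fun t : ℝ ↦ f (exp (t * I))) =ᶠ[𝓝 θ] fun t ↦ exp (φ t * I)) :
    ‖deriv f (exp (θ * I))‖ = |φ'| := by
  have hchain := hf.hasDerivAt.comp θ (hasDerivAt_exp_ofReal_mul_I (hasDerivAt_id' θ))
  have hderiv : deriv f (exp (θ * I)) * (exp (θ * I) * ((1 : ℝ) * I)) =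
      exp (φ θ * I) * (φ' * I) :=
    hchain.unique ((hasDerivAt_exp_ofReal_mul_I hφ).congr_of_eventuallyEq hlift)
  simpa [norm_exp_ofReal_mul_I] using congrArg norm hderiv

theorem lintegral_circle_comp_mul_enorm_deriv_eq {f : ℂ → ℂ} {φ φ' : ℝ → ℝ}
    (hf : ∀ θ : ℝ, DifferentiableAt ℂ f (exp (θ * I)))
    (hlift : ∀ θ : ℝ, f (exp (θ * I)) = exp (φ θ * I))
    (hφ : ∀ θ, HasDerivAt φ (φ' θ) θ) (hφ'_nonneg : ∀ θ, 0 ≤ φ' θ)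
    (hdegree : φ (2 * Real.pi) = φ 0 + 2 * Real.pi) (h : ℂ → ℝ≥0∞) :
    ∫⁻ θ : ℝ in Ioc 0 (2 * Real.pi), h (f (exp (θ * I))) * ‖deriv f (exp (θ * I))‖ₑ =
      ∫⁻ θ : ℝ in Ioc 0 (2 * Real.pi), h (exp (θ * I)) := by
  have enorm_deriv (θ : ℝ) : ‖deriv f (exp (θ * I))‖ₑ = ENNReal.ofReal (φ' θ) := by
    rw [← ofReal_norm, norm_deriv_eq_abs_of_eventuallyEq_exp (hf θ) (hφ θ) (.of_forall hlift),
      abs_of_nonneg (hφ'_nonneg θ)]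
  have hmono : Monotone φ := monotone_of_hasDerivAt_nonneg hφ hφ'_nonneg
  have hperiodic : Function.Periodic (fun x : ℝ ↦ h (exp (x * I))) (2 * Real.pi) := fun x ↦ by
    simpa using congrArg h (exp_mul_I_periodic x)
  calc ∫⁻ θ : ℝ in Ioc 0 (2 * Real.pi), h (f (exp (θ * I))) * ‖deriv f (exp (θ * I))‖ₑ
    _ = ∫⁻ θ in Ioc 0 (2 * Real.pi), ENNReal.ofReal (φ' θ) * h (exp (φ θ * I)) := by
      refine lintegral_congr fun θ ↦ ?_
      rw [enorm_deriv, hlift, mul_comm]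
    _ = ∫⁻ x : ℝ in Ioc (φ 0) (φ 0 + 2 * Real.pi), h (exp (x * I)) := by
      rw [← hdegree]
      exact lintegral_Ioc_deriv_mul_comp_eq_of_monotoneOn Real.two_pi_pos.le
        (fun θ _ ↦ (hφ θ).hasDerivWithinAt) (hmono.monotoneOn _) fun x ↦ h (exp (x * I))
    _ = ∫⁻ x : ℝ in Ioc 0 (2 * Real.pi), h (exp (x * I)) := by
      simpa using lintegral_Ioc_add_eq_of_periodic Real.two_pi_pos hperiodic (φ 0) 0

lemma one_sub_mem_slitPlane {u : ℂ} (hu : ‖u‖ < 1) : 1 - u ∈ slitPlane := by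
  simpa [sub_eq_add_neg] using mem_slitPlane_of_norm_lt_one (z := -u) (by simpa)

lemma exp_neg_two_mul_arg_mul_I {w : ℂ} (hw : w ≠ 0) :
    exp ((-2 * arg w : ℝ) * I) = conj w / w := by
  have exp_arg : exp (arg w * I) = w / ‖w‖ :=
    eq_div_of_mul_eq (by simpa) (by rw [mul_comm, norm_mul_exp_arg_mul_I])
  have hconj : w * conj w = (‖w‖ : ℂ) ^ 2 := mul_conj' w
  calc exp ((-2 * arg w : ℝ) * I)
    _ = (exp (arg w * I) ^ 2)⁻¹ := by
      rw [← exp_nat_mul, ← exp_neg]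
      push_cast
      ring_nf
    _ = w * conj w / w ^ 2 := by rw [exp_arg, div_pow, inv_div, hconj]
    _ = conj w / w := by field_simp

lemma hasDerivAt_arg_comp {f : ℝ → ℂ} {f' : ℂ} {t : ℝ} (hf : HasDerivAt f f' t)
    (ht : f t ∈ slitPlane) : HasDerivAt (fun s ↦ arg (f s)) (f' / f t).im t := by
  simpa [Function.comp_def, log_im] using
    imCLM.hasFDerivAt.comp_hasDerivAt t (hf.clog_real ht)

lemma poissonKernel_nonneg {c w z : ℂ} (h : ‖w - c‖ ≤ ‖z - c‖) : 0 ≤ poissonKernel c w z := by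
  rw [poissonKernel_def]
  have : ‖w - c‖ ^ 2 ≤ ‖z - c‖ ^ 2 := by gcongr
  exact div_nonneg (sub_nonneg.mpr this) (sq_nonneg _)

section DiscMoebius

variable {b l : ℂ}

/-- The Möbius map `z ↦ l (z - b) / (1 - conj b · z)`, an automorphism of the unit disc when
`‖b‖ < 1` and `‖l‖ = 1`. -/
noncomputable def discMoebius (b l z : ℂ) : ℂ :=
  l * (z - b) / (1 - conj b * z)

/-- A lift of the restriction of `discMoebius b l` to the unit circle along `θ ↦ e^{iθ}`. The
branch of the argument is harmless, since `1 - conj b · e^{iθ}` has positive real part. -/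
noncomputable def discMoebiusAngle (b l : ℂ) (θ : ℝ) : ℝ :=
  arg l + θ - 2 * arg (1 - conj b * exp (θ * I))

lemma one_sub_conj_mul_mem_slitPlane (hb : ‖b‖ < 1) {z : ℂ} (hz : ‖z‖ = 1) :
    1 - conj b * z ∈ slitPlane :=
  one_sub_mem_slitPlane (by simpa [hz] using hb)

lemma differentiableAt_discMoebius {z : ℂ} (hz : 1 - conj b * z ≠ 0) :
    DifferentiableAt ℂ (discMoebius b l) z := by
  unfold discMoebius
  fun_prop (disch := exact hz)

lemma discMoebius_eq_mul_conj_div_of_norm_eq_one {z : ℂ} (hz : ‖z‖ = 1) :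
    discMoebius b l z = l * z * (conj (1 - conj b * z) / (1 - conj b * z)) := by
  have mul_conj_self : z * conj z = 1 := by simp [mul_conj', hz]
  have sub_eq : z - b = z * conj (1 - conj b * z) := by
    simp only [map_sub, map_one, map_mul, conj_conj]
    linear_combination b * mul_conj_self
  rw [discMoebius, sub_eq, ← mul_assoc, mul_div_assoc]

lemma discMoebius_exp_eq_exp_discMoebiusAngle (hb : ‖b‖ < 1) (hl : ‖l‖ = 1) (θ : ℝ) :
    discMoebius b l (exp (θ * I)) = exp (discMoebiusAngle b l θ * I) := by
  have hz : ‖exp (θ * I)‖ = 1 := norm_exp_ofReal_mul_I θ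
  have exp_arg : exp (arg l * I) = l := by simpa [hl] using norm_mul_exp_arg_mul_I l
  rw [discMoebius_eq_mul_conj_div_of_norm_eq_one hz, ← exp_neg_two_mul_arg_mul_I
    (slitPlane_ne_zero (one_sub_conj_mul_mem_slitPlane hb hz))]
  nth_rw 1 [← exp_arg]
  rw [← exp_add, ← exp_add, discMoebiusAngle]
  push_cast
  ring_nf

lemma discMoebiusAngle_add_two_pi (b l : ℂ) (θ : ℝ) :
    discMoebiusAngle b l (θ + 2 * Real.pi) = discMoebiusAngle b l θ + 2 * Real.pi := by
  have exp_add_two_pi : exp ((θ + 2 * Real.pi : ℝ) * I) = exp (θ * I) := by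
    simpa using exp_mul_I_periodic θ
  rw [discMoebiusAngle, discMoebiusAngle, exp_add_two_pi]
  ring

lemma hasDerivAt_discMoebiusAngle (hb : ‖b‖ < 1) (l : ℂ) (θ : ℝ) :
    HasDerivAt (discMoebiusAngle b l) (poissonKernel 0 (conj b * exp (θ * I)) 1) θ := by
  have hmem := one_sub_conj_mul_mem_slitPlane hb (norm_exp_ofReal_mul_I θ)
  have hw := slitPlane_ne_zero hmem
  have harg := hasDerivAt_arg_comp
    (((hasDerivAt_exp_ofReal_mul_I (hasDerivAt_id' θ)).const_mul (conj b)).const_sub 1) hmem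
  refine (((hasDerivAt_id' θ).const_add (arg l)).sub (harg.const_mul 2)).congr_deriv ?_
  rw [poissonKernel_eq_re_herglotzRieszKernel, Function.comp_apply, herglotzRieszKernel_def]
  set u := conj b * exp (θ * I)
  have hdiv : -(conj b * (exp (θ * I) * ((1 : ℝ) * I))) / (1 - u) = -(u / (1 - u) * I) := by
    simp only [u, Complex.ofReal_one]
    ring
  have hkernel : (1 - 0 + (u - 0)) / (1 - 0 - (u - 0)) = 1 + 2 * (u / (1 - u)) := by
    rw [sub_zero, sub_zero]
    field_simp
    ring
  rw [hdiv, hkernel]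
  simp

theorem circle_change_of_variables_general (hb : ‖b‖ < 1) (hl : ‖l‖ = 1) (h : ℂ → ℝ≥0∞) :
    ∫⁻ θ : ℝ in Ioc 0 (2 * Real.pi),
        h (discMoebius b l (exp (θ * I))) * ‖deriv (discMoebius b l) (exp (θ * I))‖ₑ =
      ∫⁻ θ : ℝ in Ioc 0 (2 * Real.pi), h (exp (θ * I)) := by
  refine lintegral_circle_comp_mul_enorm_deriv_eq (fun θ ↦ differentiableAt_discMoebius ?_)
    (discMoebius_exp_eq_exp_discMoebiusAngle hb hl) (hasDerivAt_discMoebiusAngle hb l)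
    (fun θ ↦ poissonKernel_nonneg ?_) ?_ h
  · exact slitPlane_ne_zero (one_sub_conj_mul_mem_slitPlane hb (norm_exp_ofReal_mul_I θ))
  · simpa [norm_exp_ofReal_mul_I] using hb.le
  · simpa using discMoebiusAngle_add_two_pi b l 0

end DiscMoebius

/-- Change of variables on the circle for a Möbius automorphism `γ` of the disc:
`∫_0^{2π} h(γ(e^{iθ}))·|γ′(e^{iθ})| dθ = ∫_0^{2π} h(e^{iθ}) dθ` for every
measurable `h : ℂ → [0, ∞]`. -/
theorem circle_change_of_variables (b l : ℂ) (hb : ‖b‖ < 1) (hl : ‖l‖ = 1)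
    (γ : ℂ → ℂ) (hγ : ∀ z, γ z = l * (z - b) / (1 - (starRingEnd ℂ) b * z)) :
    ∀ h : ℂ → ℝ≥0∞, Measurable h →
      ∫⁻ θ in Set.Ioc (0 : ℝ) (2 * Real.pi),
          h (γ (Complex.exp ((θ : ℂ) * Complex.I))) *
            (‖deriv γ (Complex.exp ((θ : ℂ) * Complex.I))‖₊ : ℝ≥0∞)
        = ∫⁻ θ in Set.Ioc (0 : ℝ) (2 * Real.pi), h (Complex.exp ((θ : ℂ) * Complex.I)) := by
  obtain rfl : γ = discMoebius b l := funext hγ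
  exact fun h _ ↦ circle_change_of_variables_general hb hl h
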